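/- Let x : ℕ → ℝ be a bounded sequence. Then the Knopp core of x is the closed interval from its limit inferior to its limit superior: ⋂_{k ∈ ℕ} closedConvexHull ℝ {x n : n ≥ k} = Set.Icc (liminf x) (limsup x), where liminf and limsup are taken along atTop. -/

import Mathlib

open Filter Topology

/-! The core is convex, so in `ℝ` it contains the whole interval between any two of its points.
Every cluster point of `x` lies in the core, and both the limit inferior and the limit superior are
cluster points. Conversely, an eventual lower bound `b` of `x` confines the core to the closed
convex set `[b, ∞)`, and the limit inferior is the supremum of such `b`; dually for the limit
superior. -/

section FilterCore

variable {ι 𝕜 E : Type*} [Semiring 𝕜] [PartialOrder 𝕜] [AddCommGroup E] [Module 𝕜 E]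
  [TopologicalSpace E] {f : Filter ι} {x : ι → E}

variable (𝕜) in
/-- The core of a family `x` along a filter `f`. The `𝓘`-core of a sequence with respect to an ideal
`𝓘` is its core along the filter dual to `𝓘`; the Knopp core is the case `f = atTop` on `ℕ`. -/
def filterCore (f : Filter ι) (x : ι → E) : Set E :=
  ⋂ s ∈ f, closedConvexHull 𝕜 (x '' s)

theorem convex_filterCore : Convex 𝕜 (filterCore 𝕜 f x) :=
  convex_iInter₂ fun _ _ => convex_closedConvexHull

theorem filterCore_subset_of_eventually_mem {K : Set E} (hconv : Convex 𝕜 K) (hclosed : IsClosed K)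
    (hmem : ∀ᶠ i in f, x i ∈ K) : filterCore 𝕜 f x ⊆ K :=
  (Set.biInter_subset_of_mem hmem).trans <|
    closedConvexHull_min (Set.image_preimage_subset x K) hconv hclosed

theorem mem_filterCore_of_mapClusterPt {y : E} (hy : MapClusterPt y f x) :
    y ∈ filterCore 𝕜 f x :=
  Set.mem_iInter₂_of_mem fun _ hs => closure_subset_closedConvexHull <|
    clusterPt_iff_forall_mem_closure.mp hy _ (image_mem_map hs)

theorem filterCore_eq_biInter_of_hasBasis {κ : Sort*} {p : κ → Prop} {s : κ → Set ι}
    (hf : f.HasBasis p s) :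
    filterCore 𝕜 f x = ⋂ (k) (_ : p k), closedConvexHull 𝕜 (x '' s k) :=
  hf.biInter_mem ((closedConvexHull 𝕜).monotone.comp Set.monotone_image)

theorem filterCore_atTop_eq_iInter [Preorder ι] [IsDirectedOrder ι] [Nonempty ι] :
    filterCore 𝕜 atTop x = ⋂ k, closedConvexHull 𝕜 (x '' Set.Ici k) := by
  simpa only [Set.iInter_true] using filterCore_eq_biInter_of_hasBasis atTop_basis

end FilterCore

section Order

variable {ι 𝕜 E : Type*} [Semiring 𝕜] [PartialOrder 𝕜] [AddCommGroup E]
  [ConditionallyCompleteLattice E] [IsOrderedAddMonoid E] [Module 𝕜 E] [PosSMulMono 𝕜 E]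
  [TopologicalSpace E] {f : Filter ι} {x : ι → E} {y : E}

theorem liminf_le_of_mem_filterCore [ClosedIciTopology E]
    (hx : f.IsBoundedUnder (· ≥ ·) x) (hy : y ∈ filterCore 𝕜 f x) : liminf x f ≤ y :=
  liminf_le_of_le hx fun b hb =>
    filterCore_subset_of_eventually_mem (convex_Ici b) isClosed_Ici hb hy

theorem le_limsup_of_mem_filterCore [ClosedIicTopology E]
    (hx : f.IsBoundedUnder (· ≤ ·) x) (hy : y ∈ filterCore 𝕜 f x) : y ≤ limsup x f :=
  le_limsup_of_le hx fun b hb =>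
    filterCore_subset_of_eventually_mem (convex_Iic b) isClosed_Iic hb hy

end Order

theorem knopp_core_eq_Icc_liminf_limsup_general {ι : Type*} {f : Filter ι} [f.NeBot] {x : ι → ℝ}
    (hle : f.IsBoundedUnder (· ≤ ·) x) (hge : f.IsBoundedUnder (· ≥ ·) x) :
    filterCore ℝ f x = Set.Icc (liminf x f) (limsup x f) := by
  have hliminf : liminf x f ∈ filterCore ℝ f x :=
    mem_filterCore_of_mapClusterPt (.liminf hle.isCoboundedUnder_ge hge)
  have hlimsup : limsup x f ∈ filterCore ℝ f x :=
    mem_filterCore_of_mapClusterPt (.limsup hge.isCoboundedUnder_le hle)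
  apply Set.Subset.antisymm
  · exact fun y hy => ⟨liminf_le_of_mem_filterCore hge hy, le_limsup_of_mem_filterCore hle hy⟩
  · exact convex_filterCore.ordConnected.out hliminf hlimsup

/-- Section 1: the Knopp core of a bounded real sequence is the compact interval from
its limit inferior to its limit superior. -/
theorem knopp_core_eq_Icc_liminf_limsup
    (x : ℕ → ℝ) (hx : ∃ C : ℝ, ∀ n, |x n| ≤ C) :
    (⋂ k : ℕ, closedConvexHull ℝ (x '' {n : ℕ | k ≤ n})) =
      Set.Icc (liminf x atTop) (limsup x atTop) := by
  obtain ⟨C, hC⟩ := hx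
  exact filterCore_atTop_eq_iInter.symm.trans <| knopp_core_eq_Icc_liminf_limsup_general
    (isBoundedUnder_of ⟨C, fun n => (abs_le.mp (hC n)).2⟩)
    (isBoundedUnder_of ⟨-C, fun n => (abs_le.mp (hC n)).1⟩)
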